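/- Let α ≥ 2 be real and let s satisfy −1 < s ≤ −(α+1)/(α+3). Let k ∈ ℕ and let f₀, f₁, …, f_k be reals with f₀ > 0 and f_i ≥ 0 for i = 1, …, k, and suppose the polynomial f(t) = Σ_{i=0}^k f_i · P_i^{(α,0)}(t) satisfies f(t) ≤ 0 for all t ∈ [−1, s]. Then f(1)/f₀ ≥ 1 − 1/P̃₁^{(α,0)}(s). -/

import Mathlib

open Finset

/-- The generalized binomial coefficient `binom(a, k) = a(a-1)⋯(a-k+1)/k!` for real `a`. -/
noncomputable def genBinom (a : ℝ) (k : ℕ) : ℝ :=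
  (∏ i ∈ Finset.range k, (a - i)) / (Nat.factorial k)

/-- The Jacobi polynomial
`P_n^{(α,β)}(x) = Σ_{s=0}^n binom(n+α, n-s)·binom(n+β, s)·((x-1)/2)^s·((x+1)/2)^{n-s}`. -/
noncomputable def jacobiP (n : ℕ) (α β x : ℝ) : ℝ :=
  ∑ s ∈ Finset.range (n + 1),
    genBinom (n + α) (n - s) * genBinom (n + β) s * ((x - 1) / 2) ^ s * ((x + 1) / 2) ^ (n - s)

/-- The normalized Jacobi polynomial `P̃_n^{(α,β)}(x) = P_n^{(α,β)}(x) / P_n^{(α,β)}(1)`. -/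
noncomputable def jacobiPt (n : ℕ) (α β x : ℝ) : ℝ :=
  jacobiP n α β x / jacobiP n α β 1

/-!
Since `f` is nonpositive at `s` and has nonnegative coefficients, it suffices that
`P̃_n(s) ≥ P̃_1(s)` for all `n ≥ 1`, where `P̃_1(s) < 0`. In the variable `t = (x + 1) / 2` the
condition on `s` reads `(α + 3)t ≤ 1`, and its endpoint is exactly where `P̃_2 = P̃_1`.

For `n ≥ 5` the inequality follows from a Sonine-type bound on `|P_n|`: by the Jacobi differential
equation, a weighted sum of `P_n²` and `P_n'²` decreases from its explicit value at `t = 0`, while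
`P_n(1)` grows with `n`. This bound is too weak for `n ≤ 4`, where the polynomials are expanded
explicitly.
-/

open Polynomial

section LinearProgramming

lemma one_sub_one_div_le_sum_div {k : ℕ} {f u v : ℕ → ℝ} {m : ℝ} (hm : m < 0) (hf0 : 0 < f 0)
    (hf : ∀ i, 1 ≤ i → i ≤ k → 0 ≤ f i) (hu0 : u 0 = 1) (hv0 : v 0 = 1)
    (hle : ∀ i, 1 ≤ i → i ≤ k → m * u i ≤ v i) (hv : ∑ i ∈ range (k + 1), f i * v i ≤ 0) :
    1 - 1 / m ≤ (∑ i ∈ range (k + 1), f i * u i) / f 0 := by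
  rw [sum_range_succ', hv0] at hv
  rw [sum_range_succ', hu0]
  have hsum : m * ∑ i ∈ range k, f (i + 1) * u (i + 1) ≤
      ∑ i ∈ range k, f (i + 1) * v (i + 1) := by
    rw [mul_sum]
    refine sum_le_sum fun i hi ↦ ?_
    have hik : i + 1 ≤ k := mem_range.1 hi
    rw [mul_left_comm]
    exact mul_le_mul_of_nonneg_left (hle _ (by omega) hik) (hf _ (by omega) hik)
  have htail : f 0 / -m ≤ ∑ i ∈ range k, f (i + 1) * u (i + 1) := by
    rw [div_le_iff₀ (by linarith)]
    linarith
  rw [le_div_iff₀ hf0]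
  calc (1 - 1 / m) * f 0 = f 0 / -m + f 0 * 1 := by ring
    _ ≤ _ := by gcongr

end LinearProgramming

section GenBinom

lemma genBinom_zero (a : ℝ) : genBinom a 0 = 1 := by
  simp [genBinom]

lemma genBinom_succ_mul (a : ℝ) (k : ℕ) :
    genBinom a (k + 1) * (k + 1) = genBinom a k * (a - k) := by
  have hk : (k : ℝ) + 1 ≠ 0 := by positivity
  rw [genBinom, genBinom, prod_range_succ, Nat.factorial_succ]
  push_cast
  field_simp

lemma genBinom_add_self_succ (α : ℝ) (n : ℕ) :
    genBinom ((n + 1 : ℕ) + α) (n + 1) = genBinom (n + α) n * ((n + 1 + α) / (n + 1)) := by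
  have hshift : ∀ i ∈ range n, ((n + 1 : ℕ) : ℝ) + α - (i + 1 : ℕ) = n + α - i := by
    intro i _
    push_cast
    ring
  rw [genBinom, genBinom, prod_range_succ', prod_congr rfl hshift, Nat.factorial_succ]
  push_cast
  field_simp
  ring

lemma genBinom_add_self_one (α : ℝ) : genBinom ((1 : ℕ) + α) 1 = α + 1 := by
  simp [genBinom, add_comm]

lemma genBinom_natCast_self (n : ℕ) : genBinom n n = 1 := by
  induction n with
  | zero => exact genBinom_zero _
  | succ n ih =>
    have hn : (n : ℝ) + 1 ≠ 0 := by positivity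
    simpa [ih, hn] using genBinom_add_self_succ 0 n

lemma genBinom_add_self_pos {α : ℝ} (hα : -1 < α) (n : ℕ) : 0 < genBinom (n + α) n := by
  refine div_pos (prod_pos fun i hi ↦ ?_) (by positivity)
  have hi' : (i : ℝ) + 1 ≤ n := by exact_mod_cast mem_range.1 hi
  linarith

lemma monotone_genBinom_add_self {α : ℝ} (hα : 0 ≤ α) :
    Monotone fun n : ℕ ↦ genBinom (n + α) n := by
  refine monotone_nat_of_le_succ fun n ↦ ?_
  rw [genBinom_add_self_succ]
  refine le_mul_of_one_le_right (genBinom_add_self_pos (by linarith) n).le ?_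
  rw [one_le_div (by positivity)]
  linarith

end GenBinom

section ShiftedJacobi

/-- The coefficient of `X ^ j * (X - 1) ^ (n - j)` in the shifted Jacobi polynomial. -/
noncomputable def jacobiCoeff (n : ℕ) (α β : ℝ) (j : ℕ) : ℝ :=
  genBinom (n + α) j * genBinom (n + β) (n - j)

/-- The Jacobi polynomial transported to `[0, 1]` by `t = (x + 1) / 2`, as an element of `ℝ[X]`. -/
noncomputable def shiftedJacobi (n : ℕ) (α β : ℝ) : ℝ[X] :=
  ∑ j ∈ range (n + 1), jacobiCoeff n α β j • (X ^ j * (X - 1) ^ (n - j))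

lemma eval_shiftedJacobi (n : ℕ) (α β t : ℝ) :
    (shiftedJacobi n α β).eval t =
      ∑ j ∈ range (n + 1), jacobiCoeff n α β j * (t ^ j * (t - 1) ^ (n - j)) := by
  simp [shiftedJacobi, eval_finsetSum]

lemma jacobiP_eq_eval_shiftedJacobi (n : ℕ) (α β x : ℝ) :
    jacobiP n α β x = (shiftedJacobi n α β).eval ((x + 1) / 2) := by
  rw [jacobiP, eval_shiftedJacobi, ← sum_range_reflect]
  refine sum_congr rfl fun j hj ↦ ?_
  have hjn : j ≤ n := Nat.lt_succ_iff.1 (mem_range.1 hj)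
  have hx : (x + 1) / 2 - 1 = (x - 1) / 2 := by ring
  rw [show n + 1 - 1 - j = n - j by omega, Nat.sub_sub_self hjn, jacobiCoeff, hx]
  ring

lemma eval_one_shiftedJacobi (n : ℕ) (α β : ℝ) :
    (shiftedJacobi n α β).eval 1 = genBinom (n + α) n := by
  rw [eval_shiftedJacobi, sum_eq_single_of_mem n (self_mem_range_succ n)]
  · simp [jacobiCoeff, genBinom_zero]
  · intro j hj hjn
    have : n - j ≠ 0 := by grind
    simp [this]

lemma eval_zero_shiftedJacobi (n : ℕ) (α β : ℝ) :
    (shiftedJacobi n α β).eval 0 = (-1) ^ n * genBinom (n + β) n := by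
  rw [eval_shiftedJacobi, sum_eq_single_of_mem 0 (by simp)]
  · simp [jacobiCoeff, genBinom_zero, mul_comm]
  · intro j _ hj
    simp [hj]

lemma jacobiP_apply_one (n : ℕ) (α β : ℝ) : jacobiP n α β 1 = genBinom (n + α) n := by
  rw [jacobiP_eq_eval_shiftedJacobi, ← eval_one_shiftedJacobi n α β]
  norm_num

lemma jacobiP_zero (α β x : ℝ) : jacobiP 0 α β x = 1 := by
  simp [jacobiP, genBinom_zero]

end ShiftedJacobi

section DifferentialEquation

/-- The Jacobi differential operator `t(1 - t) d²/dt² + (β + 1 - (α + β + 2)t) d/dt` on `[0, 1]`,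
of which the shifted Jacobi polynomials are eigenvectors. -/
noncomputable def jacobiOperator (α β : ℝ) : ℝ[X] →ₗ[ℝ] ℝ[X] :=
  LinearMap.mulLeft ℝ (X * (1 - X)) ∘ₗ derivative ∘ₗ derivative +
    LinearMap.mulLeft ℝ (C (β + 1) - C (α + β + 2) * X) ∘ₗ derivative

lemma jacobiOperator_apply (α β : ℝ) (p : ℝ[X]) :
    jacobiOperator α β p = X * (1 - X) * derivative (derivative p) +
      (C (β + 1) - C (α + β + 2) * X) * derivative p :=
  rfl

lemma derivative_X_pow_mul_X_sub_one_pow (j m : ℕ) :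
    derivative (X ^ j * (X - 1) ^ m : ℝ[X]) =
      (j : ℝ) • (X ^ (j - 1) * (X - 1) ^ m) + (m : ℝ) • (X ^ j * (X - 1) ^ (m - 1)) := by
  rw [derivative_mul, derivative_X_pow, ← C_1, derivative_X_sub_C_pow]
  simp only [smul_eq_C_mul, map_natCast]
  ring

lemma jacobiOperator_X_pow_mul_X_sub_one_pow (α β : ℝ) (j m : ℕ) :
    jacobiOperator α β (X ^ j * (X - 1) ^ m) =
      (j * (j + β)) • (X ^ (j - 1) * (X - 1) ^ m) - (m * (m + α)) • (X ^ j * (X - 1) ^ (m - 1)) -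
        ((j + m) * (j + m + α + β + 1)) • (X ^ j * (X - 1) ^ m) := by
  simp only [jacobiOperator_apply, derivative_X_pow_mul_X_sub_one_pow, derivative_add,
    derivative_smul]
  simp only [smul_eq_C_mul, C_add, C_mul, C_1, C_ofNat, map_natCast]
  rcases j with _ | _ | j <;> rcases m with _ | _ | m <;>
    simp only [Nat.add_sub_cancel, Nat.zero_sub, zero_add] <;> push_cast <;> ring

lemma jacobiCoeff_succ_mul {n j : ℕ} (hj : j < n) (α β : ℝ) :
    jacobiCoeff n α β (j + 1) * ((j + 1 : ℕ) * ((j + 1 : ℕ) + β)) =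
      jacobiCoeff n α β j * ((n - j : ℕ) * ((n - j : ℕ) + α)) := by
  obtain ⟨m, rfl⟩ := Nat.exists_eq_add_of_lt hj
  have hα := genBinom_succ_mul ((j + m + 1 : ℕ) + α) j
  have hβ := genBinom_succ_mul ((j + m + 1 : ℕ) + β) m
  simp only [jacobiCoeff, show j + m + 1 - (j + 1) = m by omega,
    show j + m + 1 - j = m + 1 by omega]
  push_cast at hα hβ ⊢
  linear_combination (genBinom (j + m + 1 + β) m * (j + 1 + β)) * hα -
    (genBinom (j + m + 1 + α) j * (m + 1 + α)) * hβ

theorem jacobiOperator_shiftedJacobi (n : ℕ) (α β : ℝ) :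
    jacobiOperator α β (shiftedJacobi n α β) =
      -(n * (n + α + β + 1) : ℝ) • shiftedJacobi n α β := by
  let lower (j : ℕ) : ℝ[X] :=
    (jacobiCoeff n α β j * (j * (j + β))) • (X ^ (j - 1) * (X - 1) ^ (n - j))
  let upper (j : ℕ) : ℝ[X] :=
    (jacobiCoeff n α β j * ((n - j : ℕ) * ((n - j : ℕ) + α))) • (X ^ j * (X - 1) ^ (n - j - 1))
  have hterm : ∀ j ∈ range (n + 1),
      jacobiOperator α β (jacobiCoeff n α β j • (X ^ j * (X - 1) ^ (n - j))) =
        lower j - upper j - (n * (n + α + β + 1) : ℝ) •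
          (jacobiCoeff n α β j • (X ^ j * (X - 1) ^ (n - j))) := by
    intro j hj
    have hn : (j : ℝ) + (n - j : ℕ) = n := by
      exact_mod_cast Nat.add_sub_cancel' (Nat.lt_succ_iff.1 (mem_range.1 hj))
    rw [map_smul, jacobiOperator_X_pow_mul_X_sub_one_pow, hn]
    module
  have htelescope : ∑ j ∈ range (n + 1), lower j = ∑ j ∈ range (n + 1), upper j := by
    rw [sum_range_succ' lower, sum_range_succ upper]
    have hlower : lower 0 = 0 := by simp [lower]
    have hupper : upper n = 0 := by simp [upper]
    rw [hlower, hupper]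
    congr 1
    refine sum_congr rfl fun j hj ↦ ?_
    simp only [lower, upper, jacobiCoeff_succ_mul (mem_range.1 hj), Nat.add_sub_cancel,
      Nat.sub_sub]
  rw [shiftedJacobi, map_sum, sum_congr rfl hterm, sum_sub_distrib, sum_sub_distrib, htelescope,
    ← smul_sum]
  module

end DifferentialEquation

section SonineBound

/-- The Sonine energy `n(n + α + β + 1) p² + t(1 - t) p'²` of the shifted Jacobi polynomial `p`,
multiplied by the eigenvalue to avoid a division. -/
noncomputable def jacobiEnergy (n : ℕ) (α β : ℝ) : ℝ[X] :=
  C (n * (n + α + β + 1)) * shiftedJacobi n α β ^ 2 +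
    X * (1 - X) * derivative (shiftedJacobi n α β) ^ 2

lemma derivative_jacobiEnergy (n : ℕ) (α β : ℝ) :
    derivative (jacobiEnergy n α β) =
      (C (2 * (α + β + 1)) * X - C (2 * β + 1)) * derivative (shiftedJacobi n α β) ^ 2 := by
  have hode := jacobiOperator_shiftedJacobi n α β
  rw [jacobiOperator_apply, smul_eq_C_mul] at hode
  simp only [jacobiEnergy, derivative_add, derivative_mul, derivative_sub, derivative_pow,
    derivative_C, derivative_X, derivative_one, C_add, C_neg, C_mul, C_1, C_ofNat, Nat.cast_ofNat,
    Nat.add_one_sub_one, pow_one] at hode ⊢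
  linear_combination (2 * derivative (shiftedJacobi n α β)) * hode

/-- The energy of `P_n^{(α,0)}` with the weight `1 - (2α + 3)t/4`, chosen so that it decreases on
`[0, 1 / (α + 3)]`, beyond the critical point `1 / (2(α + 1))` of the plain energy. -/
noncomputable def weightedJacobiEnergy (n : ℕ) (α : ℝ) : ℝ[X] :=
  (1 - C ((2 * α + 3) / 4) * X) * jacobiEnergy n α 0

lemma eval_zero_weightedJacobiEnergy (n : ℕ) (α : ℝ) :
    (weightedJacobiEnergy n α).eval 0 = n * (n + α + 1) := by
  simp [weightedJacobiEnergy, jacobiEnergy, eval_zero_shiftedJacobi, genBinom_natCast_self,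
    ← pow_mul, mul_comm n 2]

lemma eval_derivative_weightedJacobiEnergy (n : ℕ) (α t : ℝ) :
    (derivative (weightedJacobiEnergy n α)).eval t =
      -((2 * α + 3) / 4 * (n * (n + α + 1)) * (shiftedJacobi n α 0).eval t ^ 2 +
        ((1 - (α + 3) * t) ^ 2 + 4 * t * (1 - (α + 3) * t) + 15 / 4 * t ^ 2) *
          (derivative (shiftedJacobi n α 0)).eval t ^ 2) := by
  rw [weightedJacobiEnergy, derivative_mul, derivative_jacobiEnergy, jacobiEnergy]
  simp only [derivative_sub, derivative_mul, derivative_C, derivative_X, derivative_one, eval_add,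
    eval_sub, eval_mul, eval_pow, eval_C, eval_X, eval_zero, eval_one]
  ring

lemma antitoneOn_eval_weightedJacobiEnergy {α : ℝ} (hα : -1 < α) (n : ℕ) :
    AntitoneOn (fun t ↦ (weightedJacobiEnergy n α).eval t) (Set.Icc 0 (1 / (α + 3))) := by
  refine antitoneOn_of_deriv_nonpos (convex_Icc _ _) (Polynomial.continuousOn _)
    (Polynomial.differentiableOn _) fun t ht ↦ ?_
  rw [interior_Icc, Set.mem_Ioo, lt_div_iff₀' (by linarith)] at ht
  have hu : 0 ≤ 1 - (α + 3) * t := by linarith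
  have hc : 0 ≤ (2 * α + 3) / 4 := by linarith
  have hl : 0 ≤ (n : ℝ) * (n + α + 1) := by
    have : (0 : ℝ) ≤ n := n.cast_nonneg
    exact mul_nonneg this (by linarith)
  have ht0 := ht.1
  rw [Polynomial.deriv, eval_derivative_weightedJacobiEnergy, neg_nonpos]
  positivity

theorem sq_eval_shiftedJacobi_le {α t : ℝ} (hα : -1 < α) {n : ℕ} (hn : 1 ≤ n) (ht : 0 ≤ t)
    (ht' : (α + 3) * t ≤ 1) :
    (1 - (2 * α + 3) / 4 * t) * (shiftedJacobi n α 0).eval t ^ 2 ≤ 1 := by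
  have hn' : (1 : ℝ) ≤ n := by exact_mod_cast hn
  have hl : 0 < (n : ℝ) * (n + α + 1) := mul_pos (by linarith) (by linarith)
  have hmem : t ∈ Set.Icc 0 (1 / (α + 3)) := ⟨ht, (le_div_iff₀' (by linarith)).2 ht'⟩
  have hanti := antitoneOn_eval_weightedJacobiEnergy hα n ⟨le_rfl, ht.trans hmem.2⟩ hmem ht
  have hw : 0 ≤ 1 - (2 * α + 3) / 4 * t := by linarith
  have ht1 : 0 ≤ 1 - t := by nlinarith
  have hkinetic : 0 ≤ (1 - (2 * α + 3) / 4 * t) *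
      (t * (1 - t) * (derivative (shiftedJacobi n α 0)).eval t ^ 2) := by positivity
  refine le_of_mul_le_mul_left ?_ hl
  simp only [eval_zero_weightedJacobiEnergy] at hanti
  simp only [weightedJacobiEnergy, jacobiEnergy, eval_mul, eval_add, eval_sub, eval_pow, eval_C,
    eval_X, eval_one] at hanti
  linarith

end SonineBound

section Comparison

variable {α t : ℝ}

lemma eval_shiftedJacobi_one (α t : ℝ) : (shiftedJacobi 1 α 0).eval t = (α + 2) * t - 1 := by
  simp only [eval_shiftedJacobi, jacobiCoeff, genBinom, sum_range_succ, sum_range_zero,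
    prod_range_succ, prod_range_zero, Nat.reduceSub, Nat.factorial]
  push_cast
  ring

lemma jacobiPt_one (α x : ℝ) :
    jacobiPt 1 α 0 x = ((α + 2) * ((x + 1) / 2) - 1) / (α + 1) := by
  rw [jacobiPt, jacobiP_apply_one, genBinom_add_self_one, jacobiP_eq_eval_shiftedJacobi,
    eval_shiftedJacobi_one]

lemma mul_genBinom_le_eval_shiftedJacobi_two (hα : -1 < α) (ht : 0 ≤ t)
    (ht' : (α + 3) * t ≤ 1) :
    ((α + 2) * t - 1) * genBinom ((2 : ℕ) + α) 2 ≤ (α + 1) * (shiftedJacobi 2 α 0).eval t := by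
  have hfactor : (α + 1) * (shiftedJacobi 2 α 0).eval t -
      ((α + 2) * t - 1) * genBinom ((2 : ℕ) + α) 2 =
        (α + 1) * (α + 4) / 2 * ((1 - t) * (1 - (α + 3) * t)) := by
    simp only [eval_shiftedJacobi, jacobiCoeff, genBinom, sum_range_succ, sum_range_zero,
      prod_range_succ, prod_range_zero, Nat.reduceSub, Nat.factorial]
    push_cast
    ring
  have h1 : 0 ≤ α + 1 := by linarith
  have h4 : 0 ≤ α + 4 := by linarith
  have ht1 : 0 ≤ 1 - t := by nlinarith
  have hu : 0 ≤ 1 - (α + 3) * t := by linarith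
  rw [← sub_nonneg, hfactor]
  exact mul_nonneg (by positivity) (mul_nonneg ht1 hu)

lemma eval_shiftedJacobi_three (α t : ℝ) :
    (shiftedJacobi 3 α 0).eval t = -1 + 3 * (α + 4) * t - 3 / 2 * (α + 4) * (α + 5) * t ^ 2 +
      (α + 4) * (α + 5) * (α + 6) / 6 * t ^ 3 := by
  simp only [eval_shiftedJacobi, jacobiCoeff, genBinom, sum_range_succ, sum_range_zero,
    prod_range_succ, prod_range_zero, Nat.reduceSub, Nat.factorial]
  push_cast
  ring

lemma le_eval_shiftedJacobi_three (hα : 2 ≤ α) (ht : 0 ≤ t) (ht' : (α + 3) * t ≤ 1) :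
    (α + 3) * t - 1 ≤ (shiftedJacobi 3 α 0).eval t := by
  have hquad : 3 / 2 * (α + 4) * (α + 5) * t ≤ 2 * α + 9 :=
    calc 3 / 2 * (α + 4) * (α + 5) * t ≤ (2 * α + 9) * (α + 3) * t :=
        mul_le_mul_of_nonneg_right (by nlinarith) ht
      _ = (2 * α + 9) * ((α + 3) * t) := by ring
      _ ≤ 2 * α + 9 := mul_le_of_le_one_right (by linarith) ht'
  have hcubic : 0 ≤ (α + 4) * (α + 5) * (α + 6) / 6 * t ^ 3 := by positivity
  rw [eval_shiftedJacobi_three]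
  linarith [mul_le_mul_of_nonneg_right hquad ht]

lemma eval_shiftedJacobi_four (α t : ℝ) :
    (shiftedJacobi 4 α 0).eval t = 1 - 4 * (α + 5) * t + 3 * (α + 5) * (α + 6) * t ^ 2 -
      2 / 3 * (α + 5) * (α + 6) * (α + 7) * t ^ 3 +
      (α + 5) * (α + 6) * (α + 7) * (α + 8) / 24 * t ^ 4 := by
  simp only [eval_shiftedJacobi, jacobiCoeff, genBinom, sum_range_succ, sum_range_zero,
    prod_range_succ, prod_range_zero, Nat.reduceSub, Nat.factorial]
  push_cast
  ring

lemma le_eval_shiftedJacobi_four (hα : 2 ≤ α) (ht : 0 ≤ t) (ht' : (α + 3) * t ≤ 1) :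
    2 * (1 - (α + 5) * t) ^ 2 - 1 ≤ (shiftedJacobi 4 α 0).eval t := by
  have hcubic : 2 / 3 * (α + 6) * (α + 7) * t ≤ α + 8 :=
    calc 2 / 3 * (α + 6) * (α + 7) * t ≤ (α + 8) * (α + 3) * t :=
        mul_le_mul_of_nonneg_right (by nlinarith) ht
      _ = (α + 8) * ((α + 3) * t) := by ring
      _ ≤ α + 8 := mul_le_of_le_one_right (by linarith) ht'
  have hquartic : 0 ≤ (α + 5) * (α + 6) * (α + 7) * (α + 8) / 24 * t ^ 4 := by positivity
  rw [eval_shiftedJacobi_four]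
  linarith [mul_le_mul_of_nonneg_left hcubic (by positivity : 0 ≤ (α + 5) * t ^ 2)]

lemma neg_le_eval_shiftedJacobi (hα : 2 ≤ α) {n : ℕ} (hn : 1 ≤ n) (ht : 0 ≤ t)
    (ht' : (α + 3) * t ≤ 1) : -((α + 2) / 3) ≤ (shiftedJacobi n α 0).eval t := by
  set w : ℝ := 1 - (2 * α + 3) / 4 * t with hw_def
  have hw : (2 * α + 9) / 4 ≤ (α + 3) * w := by
    rw [hw_def]
    linarith [mul_le_mul_of_nonneg_left ht' (by linarith : 0 ≤ (2 * α + 3) / 4)]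
  have hw_pos : 0 < w := pos_of_mul_pos_right (by linarith) (by linarith : 0 ≤ α + 3)
  have hone_le : 1 ≤ w * ((α + 2) / 3) ^ 2 := by
    refine le_of_mul_le_mul_left ?_ (by linarith : 0 < α + 3)
    calc (α + 3) * 1 ≤ (2 * α + 9) / 4 * ((α + 2) / 3) ^ 2 := by nlinarith
      _ ≤ (α + 3) * w * ((α + 2) / 3) ^ 2 := by gcongr
      _ = (α + 3) * (w * ((α + 2) / 3) ^ 2) := mul_assoc _ _ _
  have hsq : (shiftedJacobi n α 0).eval t ^ 2 ≤ ((α + 2) / 3) ^ 2 :=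
    le_of_mul_le_mul_left ((sq_eval_shiftedJacobi_le (by linarith) hn ht ht').trans hone_le)
      hw_pos
  exact neg_le_of_abs_le (abs_le_of_sq_le_sq hsq (by positivity))

lemma mul_genBinom_le_of_neg_le_eval_shiftedJacobi {K : ℝ} (hα : -1 < α)
    (ht' : (α + 3) * t ≤ 1) {n : ℕ} (hK : (α + 1) * (α + 3) * K ≤ genBinom (n + α) n)
    (hQ : -K ≤ (shiftedJacobi n α 0).eval t) :
    ((α + 2) * t - 1) * genBinom (n + α) n ≤ (α + 1) * (shiftedJacobi n α 0).eval t := by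
  have hgap : 1 ≤ (α + 3) * (1 - (α + 2) * t) := by nlinarith
  have hscaled : (α + 1) * K ≤ (1 - (α + 2) * t) * genBinom (n + α) n := by
    refine le_of_mul_le_mul_left ?_ (by linarith : 0 < α + 3)
    linarith [le_mul_of_one_le_left (genBinom_add_self_pos hα n).le hgap]
  linarith [mul_le_mul_of_nonneg_left hQ (by linarith : 0 ≤ α + 1)]

lemma mul_genBinom_le_eval_shiftedJacobi_three (hα : 2 ≤ α) (ht : 0 ≤ t)
    (ht' : (α + 3) * t ≤ 1) :
    ((α + 2) * t - 1) * genBinom ((3 : ℕ) + α) 3 ≤ (α + 1) * (shiftedJacobi 3 α 0).eval t := by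
  have hbinom : genBinom ((3 : ℕ) + α) 3 = (α + 1) * ((α + 2) * (α + 3) / 6) := by
    simp only [genBinom, prod_range_succ, prod_range_zero, Nat.factorial]
    push_cast
    ring
  have hone_le : 1 ≤ (α + 2) * (α + 3) / 6 := by nlinarith
  have hcompare : ((α + 2) * t - 1) * ((α + 2) * (α + 3) / 6) ≤ (shiftedJacobi 3 α 0).eval t :=
    calc ((α + 2) * t - 1) * ((α + 2) * (α + 3) / 6) ≤ (α + 2) * t - 1 :=
          mul_le_of_one_le_right (by linarith) hone_le
      _ ≤ (α + 3) * t - 1 := by linarith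
      _ ≤ (shiftedJacobi 3 α 0).eval t := le_eval_shiftedJacobi_three hα ht ht'
  rw [hbinom]
  linarith [mul_le_mul_of_nonneg_left hcompare (by linarith : 0 ≤ α + 1)]

lemma mul_genBinom_le_eval_shiftedJacobi_four (hα : 2 ≤ α) (ht : 0 ≤ t)
    (ht' : (α + 3) * t ≤ 1) :
    ((α + 2) * t - 1) * genBinom ((4 : ℕ) + α) 4 ≤ (α + 1) * (shiftedJacobi 4 α 0).eval t := by
  refine mul_genBinom_le_of_neg_le_eval_shiftedJacobi (K := 1) (by linarith) ht' ?_ ?_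
  · have hbinom : genBinom ((4 : ℕ) + α) 4 =
        (α + 1) * (α + 3) * ((α + 2) * (α + 4) / 24) := by
      simp only [genBinom, prod_range_succ, prod_range_zero, Nat.factorial]
      push_cast
      ring
    rw [hbinom]
    gcongr
    nlinarith
  · linarith [le_eval_shiftedJacobi_four hα ht ht', sq_nonneg (1 - (α + 5) * t)]

lemma mul_genBinom_le_eval_shiftedJacobi_of_five_le (hα : 2 ≤ α) {n : ℕ} (hn : 5 ≤ n)
    (ht : 0 ≤ t) (ht' : (α + 3) * t ≤ 1) :
    ((α + 2) * t - 1) * genBinom (n + α) n ≤ (α + 1) * (shiftedJacobi n α 0).eval t := by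
  refine mul_genBinom_le_of_neg_le_eval_shiftedJacobi (K := (α + 2) / 3) (by linarith) ht' ?_
    (neg_le_eval_shiftedJacobi hα (by omega) ht ht')
  have hbinom : genBinom ((5 : ℕ) + α) 5 =
      (α + 1) * (α + 3) * ((α + 2) / 3 * ((α + 4) * (α + 5) / 40)) := by
    simp only [genBinom, prod_range_succ, prod_range_zero, Nat.factorial]
    push_cast
    ring
  calc (α + 1) * (α + 3) * ((α + 2) / 3)
      ≤ (α + 1) * (α + 3) * ((α + 2) / 3 * ((α + 4) * (α + 5) / 40)) := by
        gcongr
        exact le_mul_of_one_le_right (by linarith) (by nlinarith)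
    _ = genBinom ((5 : ℕ) + α) 5 := hbinom.symm
    _ ≤ genBinom (n + α) n := monotone_genBinom_add_self (by linarith) hn

lemma mul_genBinom_le_eval_shiftedJacobi (hα : 2 ≤ α) {n : ℕ} (hn : 1 ≤ n)
    (ht : 0 ≤ t) (ht' : (α + 3) * t ≤ 1) :
    ((α + 2) * t - 1) * genBinom (n + α) n ≤ (α + 1) * (shiftedJacobi n α 0).eval t := by
  rcases Nat.lt_or_ge n 5 with hn5 | hn5
  · interval_cases n
    · rw [genBinom_add_self_one, eval_shiftedJacobi_one, mul_comm]
    · exact mul_genBinom_le_eval_shiftedJacobi_two (by linarith) ht ht'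
    · exact mul_genBinom_le_eval_shiftedJacobi_three hα ht ht'
    · exact mul_genBinom_le_eval_shiftedJacobi_four hα ht ht'
  · exact mul_genBinom_le_eval_shiftedJacobi_of_five_le hα hn5 ht ht'

theorem jacobiPt_one_mul_jacobiP_one_le {x : ℝ} (hα : 2 ≤ α) {n : ℕ} (hn : 1 ≤ n)
    (hx : -1 ≤ x) (hx' : x ≤ -(α + 1) / (α + 3)) :
    jacobiPt 1 α 0 x * jacobiP n α 0 1 ≤ jacobiP n α 0 x := by
  have ht' : (α + 3) * ((x + 1) / 2) ≤ 1 := by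
    rw [le_div_iff₀ (by linarith)] at hx'
    linarith
  rw [jacobiPt_one, jacobiP_apply_one, jacobiP_eq_eval_shiftedJacobi, div_mul_eq_mul_div,
    div_le_iff₀' (by linarith)]
  exact mul_genBinom_le_eval_shiftedJacobi hα hn (by linarith) ht'

lemma jacobiPt_one_neg {x : ℝ} (hα : -1 < α) (hx : x ≤ -(α + 1) / (α + 3)) :
    jacobiPt 1 α 0 x < 0 := by
  rw [le_div_iff₀ (by linarith)] at hx
  rw [jacobiPt_one]
  exact div_neg_of_neg_of_pos (by nlinarith) (by linarith)

end Comparison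

theorem lp_bound_optimal_beta_zero_general {α s : ℝ} (hα : 2 ≤ α) (hs0 : -1 ≤ s)
    (hs1 : s ≤ -(α + 1) / (α + 3)) {k : ℕ} {f : ℕ → ℝ} (hf0 : 0 < f 0)
    (hf : ∀ i, 1 ≤ i → i ≤ k → 0 ≤ f i)
    (hneg : ∑ i ∈ range (k + 1), f i * jacobiP i α 0 s ≤ 0) :
    1 - 1 / jacobiPt 1 α 0 s ≤ (∑ i ∈ range (k + 1), f i * jacobiP i α 0 1) / f 0 :=
  one_sub_one_div_le_sum_div (jacobiPt_one_neg (by linarith) hs1) hf0 hf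
    (jacobiP_zero α 0 1) (jacobiP_zero α 0 s)
    (fun _ hi _ ↦ jacobiPt_one_mul_jacobiP_one_le hα hi hs0 hs1) hneg

/-- Optimality of the degree-one polynomial in the linear programming bound for the
complex sphere (`β = 0`): for `α ≥ 2` and `-1 < s ≤ -(α+1)/(α+3)`, any feasible
polynomial `f(t) = Σ_{i=0}^k f_i P_i^{(α,0)}(t)` with `f₀ > 0`, `f_i ≥ 0`, and
`f(t) ≤ 0` on `[-1, s]` satisfies `f(1)/f₀ ≥ 1 - 1/P̃₁^{(α,0)}(s)`. -/
theorem lp_bound_optimal_beta_zero (α s : ℝ) (hα : 2 ≤ α)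
    (hs0 : -1 < s) (hs1 : s ≤ -(α + 1) / (α + 3))
    (k : ℕ) (f : ℕ → ℝ) (hf0 : 0 < f 0)
    (hf : ∀ i, 1 ≤ i → i ≤ k → 0 ≤ f i)
    (hneg : ∀ t, -1 ≤ t → t ≤ s →
      (∑ i ∈ Finset.range (k + 1), f i * jacobiP i α 0 t) ≤ 0) :
    (∑ i ∈ Finset.range (k + 1), f i * jacobiP i α 0 1) / f 0 ≥
      1 - 1 / jacobiPt 1 α 0 s := by
  exact lp_bound_optimal_beta_zero_general hα hs0.le hs1 hf0 hf (hneg s hs0.le le_rfl)
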